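/- arXiv:2512.07043 — 5 statements merged into one kernel-verified Lean document; each statement's English description precedes it below -/
import Mathlib

section
/- Let cs_1, …, cs_N be the controllable sets generated by the backward recursion. Then for every k ∈ {1, …, N} and every y ∈ ℝⁿ: y ∈ cs_k if and only if there exist controls s_k, …, s_{N−1} ∈ U and states y_k, …, y_N with y_k = y, y_{j+1} = A y_j + B s_j + d for j = k, …, N−1, y_j ∈ X̃ for j = k, …, N−1, and y_N ∈ X_f. That is, cs_k is exactly the set of states from which the terminal set X_f can be reached in N−k steps while satisfying the state and control constraints. -/
open Pointwise Matrix

/-!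
The states that can be steered into the target by time `N` satisfy the same one-step backward
recursion as the controllable sets: an admissible trajectory starting at time `k` is a first
admissible step followed by an admissible trajectory starting at time `k + 1`. The two families
agree at time `N`, hence at all earlier times.
-/

section ControlSystem

variable {α β : Type*} {f : α → β → α} {X T : Set α} {U : Set β} {k N : ℕ}
  {s : ℕ → β} {x : ℕ → α}

/-- Admissibility of the controls `s` and states `x` between times `k` and `N` for the control
system `x⁺ = f x u` with state constraint `X` and control constraint `U`. Both sequences are indexed
by all of `ℕ`, but only `s j` for `k ≤ j < N` and `x j` for `k ≤ j ≤ N` matter; the state constraint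
is not imposed at time `N`. -/
def IsAdmissibleTrajectory (f : α → β → α) (X : Set α) (U : Set β) (k N : ℕ)
    (s : ℕ → β) (x : ℕ → α) : Prop :=
  ∀ j, k ≤ j → j < N → s j ∈ U ∧ x (j + 1) = f (x j) (s j) ∧ x j ∈ X

/-- The backward reachable set: the states at time `k` from which some admissible trajectory
ends in the target `T` at time `N`. -/
def backwardReachableSet (f : α → β → α) (X : Set α) (U : Set β) (T : Set α) (k N : ℕ) : Set α :=
  {y | ∃ s x, x k = y ∧ IsAdmissibleTrajectory f X U k N s x ∧ x N ∈ T}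

/-- The controllable predecessor of `T`: the states in `X` that some control in `U` sends into `T`
in one step. -/
def controllablePredecessor (f : α → β → α) (X : Set α) (U : Set β) (T : Set α) : Set α :=
  {y | y ∈ X ∧ ∃ u ∈ U, f y u ∈ T}

theorem isAdmissibleTrajectory_iff_of_lt (hkN : k < N) :
    IsAdmissibleTrajectory f X U k N s x ↔
      (s k ∈ U ∧ x (k + 1) = f (x k) (s k) ∧ x k ∈ X) ∧
        IsAdmissibleTrajectory f X U (k + 1) N s x := by
  constructor
  · exact fun h => ⟨h k le_rfl hkN, fun j hkj => h j (Nat.le_of_succ_le hkj)⟩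
  · rintro ⟨hfirst, hrest⟩ j hkj hjN
    obtain rfl | hlt := hkj.eq_or_lt
    · exact hfirst
    · exact hrest j hlt hjN

theorem IsAdmissibleTrajectory.cons {y : α} {u : β}
    (h : IsAdmissibleTrajectory f X U (k + 1) N s x) (hkN : k < N)
    (hy : y ∈ X) (hu : u ∈ U) (hx : x (k + 1) = f y u) :
    IsAdmissibleTrajectory f X U k N (Function.update s k u) (Function.update x k y) := by
  refine (isAdmissibleTrajectory_iff_of_lt hkN).2 ⟨by simp [hu, hx, hy], fun j hkj hjN => ?_⟩
  have hj : j ≠ k := by omega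
  have hj_succ : j + 1 ≠ k := by omega
  simpa only [Function.update_of_ne hj, Function.update_of_ne hj_succ] using h j hkj hjN

theorem backwardReachableSet_self [Nonempty β] : backwardReachableSet f X U T N N = T := by
  ext y
  constructor
  · rintro ⟨s, x, rfl, -, hT⟩
    exact hT
  · intro hy
    exact ⟨fun _ => Classical.arbitrary β, fun _ => y, rfl,
      fun _ hNj hjN => absurd hjN hNj.not_gt, hy⟩

theorem backwardReachableSet_eq_controllablePredecessor (hkN : k < N) :
    backwardReachableSet f X U T k N =
      controllablePredecessor f X U (backwardReachableSet f X U T (k + 1) N) := by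
  ext y
  constructor
  · rintro ⟨s, x, rfl, htraj, hT⟩
    obtain ⟨⟨hs, hstep, hx⟩, hrest⟩ := (isAdmissibleTrajectory_iff_of_lt hkN).1 htraj
    exact ⟨hx, s k, hs, s, x, hstep, hrest, hT⟩
  · rintro ⟨hy, u, hu, s, x, hstep, hrest, hT⟩
    refine ⟨_, _, Function.update_self k y x, hrest.cons hkN hy hu hstep, ?_⟩
    rwa [Function.update_of_ne hkN.ne']

theorem eq_backwardReachableSet_of_recursion [Nonempty β] {cs : ℕ → Set α} (hkN : k ≤ N)
    (hcsN : cs N = T)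
    (hcs : ∀ j, k ≤ j → j < N → cs j = controllablePredecessor f X U (cs (j + 1))) :
    cs k = backwardReachableSet f X U T k N := by
  induction hkN using Nat.decreasingInduction with
  | self => rw [hcsN, backwardReachableSet_self]
  | of_succ k hkN ih =>
    rw [hcs k le_rfl hkN, ih fun j hkj => hcs j (Nat.le_of_succ_le hkj),
      backwardReachableSet_eq_controllablePredecessor hkN]

end ControlSystem

section AdditiveControl

variable {E V : Type*} [AddCommGroup E]

theorem mem_add_image_neg_add_singleton_neg {S : Set E} {U : Set V} {b : V → E} {d z : E} :
    z ∈ S + ((fun u => -b u) '' U + {-d}) ↔ ∃ u ∈ U, z + b u + d ∈ S := by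
  simp only [Set.add_singleton, Set.image_image, Set.mem_add, Set.exists_mem_image]
  constructor
  · rintro ⟨w, hw, u, hu, rfl⟩
    have hcancel : w + (-b u + -d) + b u + d = w := by abel
    exact ⟨u, hu, hcancel.symm ▸ hw⟩
  · rintro ⟨u, hu, hS⟩
    exact ⟨_, hS, u, hu, by abel⟩

theorem inter_preimage_eq_controllablePredecessor (a : E → E) (b : V → E) (d : E)
    (X S : Set E) (U : Set V) :
    X ∩ a ⁻¹' (S + ((fun u => -b u) '' U + {-d})) =
      controllablePredecessor (fun y u => a y + b u + d) X U S :=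
  Set.ext fun _ => and_congr_right' mem_add_image_neg_add_singleton_neg

theorem controllable_set_characterization_general [Nonempty V] {k N : ℕ} (hkN : k ≤ N)
    (a : E → E) (b : V → E) (d : E) (X : Set E) (U : Set V) (Xf : Set E) (cs : ℕ → Set E)
    (hcsN : cs N = Xf)
    (hcs : ∀ j, k ≤ j → j < N →
      cs j = X ∩ a ⁻¹' (cs (j + 1) + ((fun u => -b u) '' U + {-d}))) (y : E) :
    y ∈ cs k ↔
      ∃ (s : ℕ → V) (x : ℕ → E),
        x k = y ∧
        (∀ j, k ≤ j → j < N → s j ∈ U ∧ x (j + 1) = a (x j) + b (s j) + d ∧ x j ∈ X) ∧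
        x N ∈ Xf := by
  simp only [inter_preimage_eq_controllablePredecessor] at hcs
  exact Set.ext_iff.1 (eq_backwardReachableSet_of_recursion hkN hcsN hcs) y

end AdditiveControl

/-- **Controllable sets are exact backward reachable sets.**
If `cs N = X_f` and `cs k = X̃ ∩ A⁻¹(cs (k+1) ⊕ ((−B)·U ⊕ (−d)))` for `1 ≤ k < N`,
then for every `1 ≤ k ≤ N`, `y ∈ cs k` iff there are controls `s_k,…,s_{N−1} ∈ U` and
states `y_k = y`, `y_{j+1} = A y_j + B s_j + d`, with `y_j ∈ X̃` for `k ≤ j < N`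
and `y_N ∈ X_f`. -/
theorem controllable_set_characterization {n m N : ℕ}
    (A : Matrix (Fin n) (Fin n) ℝ) (hA : IsUnit A)
    (B : Matrix (Fin n) (Fin m) ℝ) (d : Fin n → ℝ)
    (X : Set (Fin n → ℝ)) (U : Set (Fin m → ℝ)) (Xf : Set (Fin n → ℝ))
    (cs : ℕ → Set (Fin n → ℝ))
    (hcsN : cs N = Xf)
    (hcs : ∀ k, 1 ≤ k → k < N →
      cs k = X ∩ ((fun y => A.mulVec y) ⁻¹'
        (cs (k + 1) + ((fun s => (-B).mulVec s) '' U + ({-d} : Set (Fin n → ℝ)))))) :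
    ∀ k, 1 ≤ k → k ≤ N → ∀ y : Fin n → ℝ,
      y ∈ cs k ↔
        ∃ (s : ℕ → Fin m → ℝ) (x : ℕ → Fin n → ℝ),
          x k = y ∧
          (∀ j, k ≤ j → j < N →
            s j ∈ U ∧
            x (j + 1) = A.mulVec (x j) + B.mulVec (s j) + d ∧
            x j ∈ X) ∧
          x N ∈ Xf := by
  simp only [neg_mulVec] at hcs
  exact fun k hk hkN => controllable_set_characterization_general hkN A.mulVec B.mulVec d X U Xf cs
    hcsN fun j hkj => hcs j (hk.trans hkj)
end

section
/- Let cs_1, …, cs_N be the controllable sets generated by the backward recursion. If X̃, X_f ⊆ ℝⁿ and U ⊆ ℝᵐ are compact and convex, then every controllable set cs_k, k = 1, …, N, is compact and convex. -/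
open Pointwise Matrix

/-- The one-step predecessor set of `S` under `f`: the states of `X` that `f` sends to `s + v` with
`s ∈ S` and `v ∈ V`. For the dynamics `x ↦ A x + B u + d` with `u ∈ U`, one takes `f = A` and
`V = (-B) '' U + {-d}`, so the sign of the input is absorbed in `V`. -/
def predecessorSet {α E : Type*} [Add E] (f : α → E) (X : Set α) (V S : Set E) : Set α :=
  X ∩ f ⁻¹' (S + V)

theorem isCompact_predecessorSet {α E : Type*} [TopologicalSpace α]
    [TopologicalSpace E] [AddGroup E] [IsTopologicalAddGroup E]
    {f : α → E} {X : Set α} {V S : Set E}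
    (hf : Continuous f) (hX : IsCompact X) (hV : IsCompact V) (hS : IsClosed S) :
    IsCompact (predecessorSet f X V S) :=
  hX.inter_right ((hS.add_right_of_isCompact hV).preimage hf)

theorem convex_predecessorSet {𝕜 E F : Type*} [Semiring 𝕜] [PartialOrder 𝕜]
    [AddCommMonoid E] [Module 𝕜 E] [AddCommMonoid F] [Module 𝕜 F]
    (f : E →ₗ[𝕜] F) {X : Set E} {V S : Set F}
    (hX : Convex 𝕜 X) (hV : Convex 𝕜 V) (hS : Convex 𝕜 S) :
    Convex 𝕜 (predecessorSet f X V S) :=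
  hX.inter ((hS.add hV).linear_preimage f)

theorem controllable_sets_compact_convex_general {𝕜 E F : Type*} [Ring 𝕜] [PartialOrder 𝕜]
    [AddCommGroup E] [Module 𝕜 E] [TopologicalSpace E] [IsTopologicalAddGroup E] [T2Space E]
    [AddCommGroup F] [Module 𝕜 F] [TopologicalSpace F]
    (A : E →L[𝕜] E) (B : F →L[𝕜] E) (d : E) {X Xf : Set E} {U : Set F}
    (hXc : IsCompact X) (hXv : Convex 𝕜 X)
    (hUc : IsCompact U) (hUv : Convex 𝕜 U)
    (hXfc : IsCompact Xf) (hXfv : Convex 𝕜 Xf)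
    {N : ℕ} (cs : ℕ → Set E) (hcsN : cs N = Xf)
    (hcs : ∀ k, 1 ≤ k → k < N → cs k = predecessorSet A X ((-B) '' U + {-d}) (cs (k + 1))) :
    ∀ k, 1 ≤ k → k ≤ N → IsCompact (cs k) ∧ Convex 𝕜 (cs k) := by
  have input_compact : IsCompact ((-B) '' U + {-d}) :=
    (hUc.image (-B).continuous).add isCompact_singleton
  have input_convex : Convex 𝕜 ((-B) '' U + {-d}) :=
    (hUv.linear_image (-B).toLinearMap).add (convex_singleton _)
  intro k hk hkN
  induction hkN using Nat.decreasingInduction with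
  | self => exact hcsN ▸ ⟨hXfc, hXfv⟩
  | of_succ k hkN ih =>
    obtain ⟨next_compact, next_convex⟩ := ih (Nat.le_add_left 1 k)
    rw [hcs k hk hkN]
    exact ⟨isCompact_predecessorSet A.continuous hXc input_compact next_compact.isClosed,
      convex_predecessorSet A.toLinearMap hXv input_convex next_convex⟩

/-- **Compactness and convexity of controllable sets.**
If `X̃`, `X_f`, and `U` are compact and convex, then every controllable set `cs k`,
`1 ≤ k ≤ N`, generated by the backward recursion is compact and convex. -/
theorem controllable_sets_compact_convex {n m N : ℕ}
    (A : Matrix (Fin n) (Fin n) ℝ) (hA : IsUnit A)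
    (B : Matrix (Fin n) (Fin m) ℝ) (d : Fin n → ℝ)
    (X : Set (Fin n → ℝ)) (U : Set (Fin m → ℝ)) (Xf : Set (Fin n → ℝ))
    (hXc : IsCompact X) (hXv : Convex ℝ X)
    (hUc : IsCompact U) (hUv : Convex ℝ U)
    (hXfc : IsCompact Xf) (hXfv : Convex ℝ Xf)
    (cs : ℕ → Set (Fin n → ℝ))
    (hcsN : cs N = Xf)
    (hcs : ∀ k, 1 ≤ k → k < N →
      cs k = X ∩ ((fun y => A.mulVec y) ⁻¹'
        (cs (k + 1) + ((fun s => (-B).mulVec s) '' U + ({-d} : Set (Fin n → ℝ)))))) :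
    ∀ k, 1 ≤ k → k ≤ N → IsCompact (cs k) ∧ Convex ℝ (cs k) := by
  simp only [neg_mulVec] at hcs
  exact controllable_sets_compact_convex_general A.mulVecLin.toContinuousLinearMap
    B.mulVecLin.toContinuousLinearMap d hXc hXv hUc hUv hXfc hXfv cs hcsN hcs
end

section
/- Let cs_1, …, cs_N be the controllable sets of the cost-augmented system generated by the backward recursion. Then for every k ∈ {1, …, N−1} and every (x, c) ∈ ℝⁿ × ℝ: (x, c) ∈ cs_k if and only if there exist controls s_k, …, s_{N−1} ∈ Ũ and states x_k = x, x_{j+1} = A x_j + B s_j + d, such that x_N ∈ X_f, (x_j, Σ_{i=j}^{N−1} ℓ(s_i)) ∈ X̃ for all j = k, …, N−1, and c = Σ_{i=k}^{N−1} ℓ(s_i). Consequently, the slice {c : (x, c) ∈ cs_k} equals the set of total costs Σ_{j=k}^{N−1} ℓ(s_j) of feasible (N−k)-step trajectories from x to X_f. -/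
open Pointwise Matrix

/-!
Translating by `-B̃ u - d̃` in the Minkowski sum and pulling back along `Ã` inverts one step of the
augmented dynamics, so each step of the backward recursion takes a one-step predecessor set. The
set of pairs (initial state, total cost) of feasible trajectories obeys the same recursion (split
off, or prepend, the first control) and has the same terminal value `X_f × {0}`, hence the two
families agree by descending induction on the time index.
-/

theorem mem_add_image_add_singleton_iff {S V : Type*} [AddCommGroup V] {C : Set V} {U : Set S}
    {g : S → V} {e v : V} :
    v ∈ C + (g '' U + {e}) ↔ ∃ u ∈ U, v - g u - e ∈ C := by
  constructor
  · rintro ⟨c, hc, _, ⟨_, ⟨u, hu, rfl⟩, _, rfl, rfl⟩, rfl⟩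
    refine ⟨u, hu, ?_⟩
    convert hc using 1
    dsimp only
    abel
  · rintro ⟨u, hu, hC⟩
    refine ⟨_, hC, _, Set.add_mem_add (Set.mem_image_of_mem g hu) (Set.mem_singleton e), ?_⟩
    dsimp only
    abel

/-- A controlled system on states `E` with controls `S` and `G`-valued stage costs. As in the
cost-augmented system, `stateConstraint` restricts pairs of a state and its cost-to-go. -/
structure CostedSystem (E S G : Type*) where
  next : E → S → E
  cost : S → G
  stateConstraint : Set (E × G)
  controlConstraint : Set S

namespace CostedSystem

variable {E S G : Type*}

section AddCommMonoid

variable [AddCommMonoid G] (sys : CostedSystem E S G) (N : ℕ)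

/-- The cost accumulated by the controls `s` over the stages `k, …, N - 1`. -/
def costToGo (s : ℕ → S) (k : ℕ) : G :=
  ∑ i ∈ Finset.Ico k N, sys.cost (s i)

/-- The controls `s` and states `xs` obey the dynamics and all constraints at the stages
`k, …, N - 1`. Sequences are indexed by all of `ℕ`; their values outside the horizon are
irrelevant. -/
def IsFeasible (k : ℕ) (s : ℕ → S) (xs : ℕ → E) : Prop :=
  ∀ j, k ≤ j → j < N →
    s j ∈ sys.controlConstraint ∧
    xs (j + 1) = sys.next (xs j) (s j) ∧
    (xs j, sys.costToGo N s j) ∈ sys.stateConstraint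

/-- The pairs of an initial state and a total cost realised by some feasible trajectory that
starts at time `k` and lies in the terminal set `Xf` at time `N`. -/
def feasibleSet (Xf : Set E) (k : ℕ) : Set (E × G) :=
  {p | ∃ (s : ℕ → S) (xs : ℕ → E),
    xs k = p.1 ∧ sys.IsFeasible N k s xs ∧ xs N ∈ Xf ∧ p.2 = sys.costToGo N s k}

variable {sys N} {k : ℕ} {s s' : ℕ → S} {xs xs' : ℕ → E}

theorem costToGo_self : sys.costToGo N s N = 0 := by
  simp [costToGo]

theorem costToGo_of_lt (hk : k < N) :
    sys.costToGo N s k = sys.cost (s k) + sys.costToGo N s (k + 1) :=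
  Finset.sum_eq_sum_Ico_succ_bot hk _

theorem costToGo_congr (hs : ∀ i, k ≤ i → s i = s' i) :
    sys.costToGo N s k = sys.costToGo N s' k :=
  Finset.sum_congr rfl fun i hi => by rw [hs i (Finset.mem_Ico.1 hi).1]

theorem isFeasible_iff_of_lt (hk : k < N) :
    sys.IsFeasible N k s xs ↔
      (s k ∈ sys.controlConstraint ∧ xs (k + 1) = sys.next (xs k) (s k) ∧
        (xs k, sys.costToGo N s k) ∈ sys.stateConstraint) ∧
      sys.IsFeasible N (k + 1) s xs := by
  refine ⟨fun h => ⟨h k le_rfl hk, fun j hj => h j (Nat.le_of_succ_le hj)⟩, ?_⟩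
  rintro ⟨hfirst, hrest⟩ j hkj hjN
  obtain rfl | hlt := hkj.eq_or_lt
  · exact hfirst
  · exact hrest j hlt hjN

theorem IsFeasible.congr (h : sys.IsFeasible N k s xs) (hs : ∀ i, k ≤ i → s i = s' i)
    (hxs : ∀ i, k ≤ i → xs i = xs' i) : sys.IsFeasible N k s' xs' := by
  intro j hkj hjN
  rw [← hs j hkj, ← hxs j hkj, ← hxs (j + 1) (by lia),
    ← costToGo_congr fun i hi => hs i (hkj.trans hi)]
  exact h j hkj hjN

theorem feasibleSet_self [Nonempty S] (Xf : Set E) : sys.feasibleSet N Xf N = Xf ×ˢ {0} := by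
  ext ⟨x, c⟩
  constructor
  · rintro ⟨s, xs, rfl, -, hXf, hc⟩
    exact ⟨hXf, hc.trans costToGo_self⟩
  · rintro ⟨hx, hc⟩
    exact ⟨fun _ => Classical.arbitrary S, fun _ => x, rfl, fun j hNj hjN => by lia, hx,
      hc.trans costToGo_self.symm⟩

end AddCommMonoid

section AddCommGroup

variable [AddCommGroup G] {sys : CostedSystem E S G} {N k : ℕ} {Xf : Set E}

/-- The admissible pairs of a state and cost-to-go that some admissible control steers into `C` in
one step, the cost of that control being deducted from the cost-to-go. -/
def predecessors (sys : CostedSystem E S G) (C : Set (E × G)) : Set (E × G) :=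
  {p ∈ sys.stateConstraint |
    ∃ u ∈ sys.controlConstraint, (sys.next p.1 u, p.2 - sys.cost u) ∈ C}

theorem feasibleSet_subset_predecessors (hk : k < N) :
    sys.feasibleSet N Xf k ⊆ sys.predecessors (sys.feasibleSet N Xf (k + 1)) := by
  rintro ⟨_, _⟩ ⟨s, xs, rfl, hfeas, hXf, rfl⟩
  obtain ⟨⟨hu, hnext, hstate⟩, hrest⟩ := (isFeasible_iff_of_lt hk).1 hfeas
  exact ⟨hstate, s k, hu, s, xs, hnext, hrest, hXf,
    sub_eq_of_eq_add' (costToGo_of_lt hk)⟩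

theorem predecessors_subset_feasibleSet (hk : k < N) :
    sys.predecessors (sys.feasibleSet N Xf (k + 1)) ⊆ sys.feasibleSet N Xf k := by
  rintro ⟨x, c⟩ ⟨hstate, u, hu, s, xs, hstart, hfeas, hXf, hcost⟩
  let s' := Function.update s k u
  let xs' := Function.update xs k x
  have hs'_head : s' k = u := Function.update_self ..
  have hxs'_head : xs' k = x := Function.update_self ..
  have hs'_tail : ∀ i, k + 1 ≤ i → s i = s' i := fun i hi =>
    (Function.update_of_ne (by lia) ..).symm
  have hxs'_tail : ∀ i, k + 1 ≤ i → xs i = xs' i := fun i hi =>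
    (Function.update_of_ne (by lia) ..).symm
  have hcost' : c = sys.costToGo N s' k := by
    rw [costToGo_of_lt hk, hs'_head, ← costToGo_congr hs'_tail]
    exact eq_add_of_sub_eq' hcost
  refine ⟨s', xs', hxs'_head, (isFeasible_iff_of_lt hk).2
    ⟨?_, hfeas.congr hs'_tail hxs'_tail⟩, hxs'_tail N hk ▸ hXf, hcost'⟩
  rw [hs'_head, hxs'_head, ← hcost', ← hxs'_tail (k + 1) le_rfl]
  exact ⟨hu, hstart, hstate⟩

theorem feasibleSet_eq_predecessors (hk : k < N) :
    sys.feasibleSet N Xf k = sys.predecessors (sys.feasibleSet N Xf (k + 1)) :=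
  (feasibleSet_subset_predecessors hk).antisymm (predecessors_subset_feasibleSet hk)

theorem eq_feasibleSet_of_eq_predecessors [Nonempty S] {cs : ℕ → Set (E × G)}
    (hN : cs N = Xf ×ˢ {0}) (hkN : k ≤ N)
    (hcs : ∀ j, k ≤ j → j < N → cs j = sys.predecessors (cs (j + 1))) :
    cs k = sys.feasibleSet N Xf k := by
  induction hkN using Nat.decreasingInduction with
  | self => rw [hN, feasibleSet_self]
  | of_succ k hk ih =>
    rw [hcs k le_rfl hk, ih fun j hj => hcs j (Nat.le_of_succ_le hj),
      feasibleSet_eq_predecessors hk]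

theorem predecessors_eq_inter_preimage [AddCommGroup E] (a : E → E) (b : S → E) (d : E)
    (ℓ : S → G) (Xt : Set (E × G)) (Ut : Set S) (C : Set (E × G)) :
    predecessors ⟨fun x u => a x + b u + d, ℓ, Xt, Ut⟩ C =
      Xt ∩ (fun p : E × G => (a p.1, p.2)) ⁻¹'
        (C + ((fun u => (-b u, ℓ u)) '' Ut + {(-d, 0)})) := by
  ext p
  simp only [predecessors, Set.mem_ofPred_eq, Set.mem_inter_iff, Set.mem_preimage,
    mem_add_image_add_singleton_iff, Prod.mk_sub_mk, sub_neg_eq_add, sub_zero]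

end AddCommGroup

end CostedSystem

theorem augmented_controllable_set_characterization_general {E S G : Type*} [AddCommGroup E]
    [Nonempty S] [AddCommGroup G] {N k : ℕ} (a : E → E) (b : S → E) (d : E) (ℓ : S → G)
    (Xt : Set (E × G)) (Ut : Set S) (Xf : Set E) (cs : ℕ → Set (E × G))
    (hcsN : cs N = Xf ×ˢ {0}) (hkN : k ≤ N)
    (hcs : ∀ j, k ≤ j → j < N →
      cs j = Xt ∩ (fun p : E × G => (a p.1, p.2)) ⁻¹'
        (cs (j + 1) + ((fun s => (-b s, ℓ s)) '' Ut + {(-d, 0)})))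
    (x : E) (c : G) :
    (x, c) ∈ cs k ↔
      ∃ (s : ℕ → S) (xs : ℕ → E),
        xs k = x ∧
        (∀ j, k ≤ j → j < N →
          s j ∈ Ut ∧
          xs (j + 1) = a (xs j) + b (s j) + d ∧
          (xs j, ∑ i ∈ Finset.Ico j N, ℓ (s i)) ∈ Xt) ∧
        xs N ∈ Xf ∧
        c = ∑ i ∈ Finset.Ico k N, ℓ (s i) := by
  let sys : CostedSystem E S G := ⟨fun x u => a x + b u + d, ℓ, Xt, Ut⟩
  have hpred : ∀ j, k ≤ j → j < N → cs j = sys.predecessors (cs (j + 1)) := fun j hkj hjN =>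
    (hcs j hkj hjN).trans
      (CostedSystem.predecessors_eq_inter_preimage a b d ℓ Xt Ut (cs (j + 1))).symm
  rw [CostedSystem.eq_feasibleSet_of_eq_predecessors hcsN hkN hpred]
  rfl

/-- **Characterization of the cost-augmented controllable sets.**
For the cost-augmented system `(x,c) ↦ (A x + B s + d, c − ℓ s)` with
`cs N = X_f × {0}` and `cs k = X̃ ∩ Ã⁻¹(cs (k+1) ⊕ ((−B̃)·Ũ ⊕ (−d̃)))`,
a pair `(x, c)` is in `cs k` (for `1 ≤ k ≤ N−1`) iff there is a feasible
`(N−k)`-step trajectory from `x` to `X_f` whose tails of accumulated cost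
satisfy the augmented state constraint, with total cost exactly `c`. -/
theorem augmented_controllable_set_characterization {n m N : ℕ}
    (A : Matrix (Fin n) (Fin n) ℝ) (hA : IsUnit A)
    (B : Matrix (Fin n) (Fin m) ℝ) (d : Fin n → ℝ)
    (ℓ : (Fin m → ℝ) →ₗ[ℝ] ℝ)
    (Xt : Set ((Fin n → ℝ) × ℝ)) (Ut : Set (Fin m → ℝ)) (Xf : Set (Fin n → ℝ))
    (cs : ℕ → Set ((Fin n → ℝ) × ℝ))
    (hcsN : cs N = Xf ×ˢ ({0} : Set ℝ))
    (hcs : ∀ k, 1 ≤ k → k < N →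
      cs k = Xt ∩ ((fun p : (Fin n → ℝ) × ℝ => (A.mulVec p.1, p.2)) ⁻¹'
        (cs (k + 1) +
          ((fun s => (-(B.mulVec s), ℓ s)) '' Ut +
            ({(-d, (0 : ℝ))} : Set ((Fin n → ℝ) × ℝ)))))) :
    ∀ k, 1 ≤ k → k < N → ∀ (x : Fin n → ℝ) (c : ℝ),
      (x, c) ∈ cs k ↔
        ∃ (s : ℕ → Fin m → ℝ) (xs : ℕ → Fin n → ℝ),
          xs k = x ∧
          (∀ j, k ≤ j → j < N →
            s j ∈ Ut ∧
            xs (j + 1) = A.mulVec (xs j) + B.mulVec (s j) + d ∧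
            (xs j, ∑ i ∈ Finset.Ico j N, ℓ (s i)) ∈ Xt) ∧
          xs N ∈ Xf ∧
          c = ∑ i ∈ Finset.Ico k N, ℓ (s i) := by
  intro k hk hkN
  exact augmented_controllable_set_characterization_general A.mulVec B.mulVec d ℓ Xt Ut Xf cs hcsN
    hkN.le fun j hkj => hcs j (hk.trans hkj)
end

section
/- (Robustified thrust-pointing constraint.) Let V be a real inner product space, let e ∈ V be a unit vector, let ψ ≥ 0 and 0 ≤ κ ≤ 1. If u ∈ V satisfies ⟨e, u⟩ − ψ ≥ (‖u‖ + ψ) κ, then for every w ∈ V with ‖w‖ ≤ ψ, ⟨e, u + w⟩ ≥ ‖u + w‖ κ. That is, the tightened pointing constraint guarantees the original pointing constraint for every disturbance of norm at most ψ. -/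
open scoped RealInnerProductSpace

section StrongDual

variable {E : Type*} [SeminormedAddCommGroup E] [NormedSpace ℝ E]

theorem strongDual_sub_opNorm_mul_le_map_add (f : StrongDual ℝ E) (u : E) {w : E} {ψ : ℝ}
    (hw : ‖w‖ ≤ ψ) : f u - ‖f‖ * ψ ≤ f (u + w) := by
  have neg_le_map : -(‖f‖ * ψ) ≤ f w := neg_le_of_abs_le (f.le_opNorm_of_le hw)
  rw [map_add]
  linarith

theorem robustified_pointing_constraint_general (f : StrongDual ℝ E) {ψ κ : ℝ} (hκ : 0 ≤ κ)
    {u : E} (h : (‖u‖ + ψ) * κ ≤ f u - ‖f‖ * ψ) {w : E} (hw : ‖w‖ ≤ ψ) :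
    ‖u + w‖ * κ ≤ f (u + w) :=
  calc ‖u + w‖ * κ
    _ ≤ (‖u‖ + ψ) * κ := by gcongr; exact norm_add_le_of_le le_rfl hw
    _ ≤ f u - ‖f‖ * ψ := h
    _ ≤ f (u + w) := strongDual_sub_opNorm_mul_le_map_add f u hw

end StrongDual

/-- **Robustified thrust-pointing constraint.**
For a unit vector `e`, `ψ ≥ 0`, and `κ ∈ [0, 1]`, the tightened pointing constraint
`⟨e, u⟩ − ψ ≥ (‖u‖ + ψ) κ` guarantees `⟨e, u + w⟩ ≥ ‖u + w‖ κ` for every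
disturbance `w` with `‖w‖ ≤ ψ`. -/
theorem robustified_pointing_constraint {V : Type*}
    [NormedAddCommGroup V] [InnerProductSpace ℝ V]
    (e : V) (he : ‖e‖ = 1) (ψ κ : ℝ) (hψ : 0 ≤ ψ)
    (hκ0 : 0 ≤ κ) (hκ1 : κ ≤ 1) (u : V)
    (h : ⟪e, u⟫ - ψ ≥ (‖u‖ + ψ) * κ) :
    ∀ w : V, ‖w‖ ≤ ψ → ⟪e, u + w⟫ ≥ ‖u + w‖ * κ := by
  have tightened : (‖u‖ + ψ) * κ ≤ innerSL ℝ e u - ‖innerSL ℝ e‖ * ψ := by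
    rwa [innerSL_apply_norm, he, one_mul, innerSL_apply_apply]
  exact fun w hw ↦ robustified_pointing_constraint_general (innerSL ℝ e) hκ0 tightened hw
end

section
/- (Robust one-step recursion.) Let A be an invertible n×n real matrix, B an n×m real matrix, d ∈ ℝⁿ, and let X̃, C ⊆ ℝⁿ, U ⊆ ℝᵐ, and W ⊆ ℝⁿ be arbitrary sets. Then X̃ ∩ A⁻¹((C ⊖ W) ⊕ ((−B)·U ⊕ (−d))) = {y ∈ X̃ : ∃ s ∈ U such that for all w ∈ W, A y + B s + d + w ∈ C}; i.e., a state is in the robustly controllable one-step set if and only if it satisfies the state constraint and admits a feasible control driving it into C for every disturbance in W. -/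
open Pointwise Matrix

/-- The Pontryagin difference `C ⊖ W`: the points that stay in `C` after translation by any
element of `W`. For a disturbance set `W` it is the target `C` tightened against every disturbance.
It is all of `G` when `W` is empty. -/
def pontryaginDiff {G : Type*} [Add G] (C W : Set G) : Set G :=
  {y | ∀ w ∈ W, y + w ∈ C}

theorem mem_sub_iff_exists_add_mem {G : Type*} [AddGroup G] {S T : Set G} {x : G} :
    x ∈ S - T ↔ ∃ t ∈ T, x + t ∈ S := by
  constructor
  · rintro ⟨s, hs, t, ht, rfl⟩
    exact ⟨t, ht, by rwa [sub_add_cancel]⟩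
  · rintro ⟨t, ht, hxt⟩
    exact ⟨x + t, hxt, t, ht, add_sub_cancel_right x t⟩

theorem image_neg_add_singleton_neg {β G : Type*} [SubtractionCommMonoid G]
    (g : β → G) (d : G) (U : Set β) :
    (fun s => -g s) '' U + {-d} = -((fun s => g s + d) '' U) := by
  simp only [Set.add_singleton, ← Set.image_neg_eq_neg, Set.image_image, neg_add]

theorem robust_one_step_backward_recursion_general {α β G : Type*} [AddCommGroup G]
    (f : α → G) (g : β → G) (d : G) (X : Set α) (C : Set G) (U : Set β) (W : Set G) :
    X ∩ f ⁻¹' (pontryaginDiff C W + ((fun s => -g s) '' U + {-d}))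
      = {y ∈ X | ∃ s ∈ U, ∀ w ∈ W, f y + g s + d + w ∈ C} := by
  ext y
  have controllable_iff : f y ∈ pontryaginDiff C W - (fun s => g s + d) '' U ↔
      ∃ s ∈ U, ∀ w ∈ W, f y + g s + d + w ∈ C := by
    simp only [mem_sub_iff_exists_add_mem, Set.exists_mem_image, ← add_assoc, pontryaginDiff,
      Set.mem_ofPred_eq]
  rw [image_neg_add_singleton_neg, ← sub_eq_add_neg]
  exact and_congr_right fun _ => controllable_iff

/-- **Robust one-step backward recursion identity** (Algorithm 4 step):
`X̃ ∩ A⁻¹((C ⊖ W) ⊕ ((−B)·U ⊕ (−d)))` is exactly the set of states `y ∈ X̃`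
admitting a control `s ∈ U` with `A y + B s + d + w ∈ C` for every disturbance
`w ∈ W`, where `C ⊖ W = {y : ∀ w ∈ W, y + w ∈ C}` is the Pontryagin difference. -/
theorem robust_one_step_backward_recursion {n m : ℕ}
    (A : Matrix (Fin n) (Fin n) ℝ) (hA : IsUnit A)
    (B : Matrix (Fin n) (Fin m) ℝ) (d : Fin n → ℝ)
    (X C : Set (Fin n → ℝ)) (U : Set (Fin m → ℝ)) (W : Set (Fin n → ℝ)) :
    X ∩ ((fun y => A.mulVec y) ⁻¹'
        ({y : Fin n → ℝ | ∀ w ∈ W, y + w ∈ C} +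
          ((fun s => (-B).mulVec s) '' U + ({-d} : Set (Fin n → ℝ)))))
      = {y ∈ X | ∃ s ∈ U, ∀ w ∈ W, A.mulVec y + B.mulVec s + d + w ∈ C} := by
  simp only [neg_mulVec]
  exact robust_one_step_backward_recursion_general A.mulVec B.mulVec d X C U W
end
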